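/- arXiv:1910.01512 — 2 statements merged into one kernel-verified Lean document; each statement's English description precedes it below -/
import Mathlib

section
/- Let n ≥ 5 be an integer. Then ∫_{ℝⁿ₊} |x + eₙ|^{−4} · ( (xₙ²/(4n(1 + xₙ))) · |x + eₙ|^{−n} )² · x₁⁴ dx = 9·ω_{n−2}·B((n−1)/2, (n+1)/2) / (16(n+2)(n+1)²·n⁴·(n−1)(n−2)). -/
/-!
Write `n = m + 2`, `t = xₙ`, `S = |x + eₙ|²`. The integrand is `(16 n²)⁻¹` times
`x₁⁴ · t⁴ (1 + t)⁻² · S^{-(m+4)}` on `t > 0`. The power of `S` is turned into exponentials by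
`Γ(a) S^{-a} = ∫₀^∞ λ^{a-1} e^{-λS} dλ`; after Tonelli, the integral over `ℝⁿ` for fixed `λ`
factors over the coordinates into a fourth Gaussian moment (coordinate `x₁`), `m` plain Gaussian
integrals and one integral over `t > 0` (`lintegral_factor`). Doing the `λ`-integral next
gives another Gamma factor times `∫₀^∞ t⁴ (1 + t)^{-(m+5)} dt = Γ(5) Γ(m) / Γ(m+5)`
(`lintegral_beta`, by the same trick). The recurrence of `Γ` then matches the closed form, since
`ω_{n-2} B((n-1)/2, (n+1)/2) = 2 π^{(n-1)/2} Γ((n+1)/2) / Γ(n)`.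

The computation is done with `∫⁻`, where exchanging integrals needs measurability only, and is
converted to a Bochner integral in `integral_core`.
-/

open MeasureTheory Set

/-- `sphereVol k` is the `k`-dimensional volume of the unit sphere `S^k ⊂ ℝ^{k+1}`,
namely `ω_k = 2 π^{(k+1)/2} / Γ((k+1)/2)`. -/
noncomputable def sphereVol (k : ℕ) : ℝ :=
  2 * Real.pi ^ ((k + 1 : ℝ) / 2) / Real.Gamma ((k + 1 : ℝ) / 2)

/-- The Euler Beta function `B(a,b) = Γ(a)Γ(b)/Γ(a+b)`. -/
noncomputable def realBeta (a b : ℝ) : ℝ :=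
  Real.Gamma a * Real.Gamma b / Real.Gamma (a + b)

/-! ### Gamma and Beta integrals -/

/-- The identity `∫₀^∞ u^{a-1} e^{-ru} du = r^{-a} Γ(a)`, as a Lebesgue integral and with a constant
inside, the form in which powers are traded for exponentials. -/
lemma lintegral_gamma {a r c : ℝ} (ha : 0 < a) (hr : 0 < r) (hc : 0 ≤ c) :
    ∫⁻ u in Ioi (0 : ℝ), ENNReal.ofReal (c * (u ^ (a - 1) * Real.exp (-(r * u))))
      = ENNReal.ofReal (c * ((1 / r) ^ a * Real.Gamma a)) := by
  rw [← Real.integral_rpow_mul_exp_neg_mul_Ioi ha hr, ← integral_const_mul]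
  refine (ofReal_integral_eq_lintegral_ofReal ?_ ?_).symm
  · have h := integrableOn_rpow_mul_exp_neg_mul_rpow (s := a - 1) (p := 1) (b := r)
      (by linarith) one_pos hr
    simp only [Real.rpow_one, neg_mul] at h
    exact h.const_mul c
  · refine (ae_restrict_iff' measurableSet_Ioi).2 (.of_forall fun u hu => ?_)
    have hu : 0 < u := hu
    positivity

/-- The Beta integral `B(5, a - 5)` over `(0, ∞)`, obtained by writing `(1 + t)^{-a}` as an integral
of exponentials and exchanging the order of integration. -/
lemma lintegral_beta {a : ℝ} (ha : 5 < a) :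
    ∫⁻ t in Ioi (0 : ℝ), ENNReal.ofReal (t ^ 4 * (1 / (1 + t)) ^ a)
      = ENNReal.ofReal (24 * Real.Gamma (a - 5) / Real.Gamma a) := by
  have hG : 0 < Real.Gamma a := Real.Gamma_pos_of_pos (by linarith)
  have hG5 : Real.Gamma 5 = 24 := by
    have := Real.Gamma_nat_eq_factorial 4
    norm_num [Nat.factorial, -Real.Gamma_ofNat_eq_factorial] at this
    exact this
  have key : ∫⁻ t in Ioi (0 : ℝ), ENNReal.ofReal (t ^ 4 * ((1 / (1 + t)) ^ a * Real.Gamma a))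
      = ENNReal.ofReal (24 * Real.Gamma (a - 5)) := by
    calc
      _ = ∫⁻ t in Ioi (0 : ℝ), ∫⁻ u in Ioi (0 : ℝ),
            ENNReal.ofReal (t ^ 4 * (u ^ (a - 1) * Real.exp (-((1 + t) * u)))) := by
          refine setLIntegral_congr_fun measurableSet_Ioi fun t ht => ?_
          have ht : 0 < t := ht
          exact (lintegral_gamma (by linarith) (by linarith) (by positivity)).symm
      _ = ∫⁻ u in Ioi (0 : ℝ), ∫⁻ t in Ioi (0 : ℝ),
            ENNReal.ofReal (t ^ 4 * (u ^ (a - 1) * Real.exp (-((1 + t) * u)))) := by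
          refine lintegral_lintegral_swap (Measurable.aemeasurable ?_)
          unfold Function.uncurry
          fun_prop
      _ = ∫⁻ u in Ioi (0 : ℝ), ENNReal.ofReal
            (24 * (u ^ ((a - 5) - 1) * Real.exp (-(1 * u)))) := by
          refine setLIntegral_congr_fun measurableSet_Ioi fun u hu => ?_
          have hu : 0 < u := hu
          have h := lintegral_gamma (a := 5) (r := u) (c := u ^ (a - 1) * Real.exp (-u))
            (by norm_num) hu (by positivity)
          have e : u ^ ((a - 5) - 1) = u ^ (a - 1) * (1 / u) ^ (5 : ℝ) := by
            rw [one_div, Real.inv_rpow hu.le, ← Real.rpow_neg hu.le, ← Real.rpow_add hu]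
            ring_nf
          rw [hG5] at h
          rw [e]
          convert h using 1
          · refine setLIntegral_congr_fun measurableSet_Ioi fun t ht => ?_
            have e2 : t ^ ((5 : ℝ) - 1) = t ^ 4 := by
              rw [← Real.rpow_natCast]; norm_num
            have e3 : Real.exp (-((1 + t) * u)) = Real.exp (-u) * Real.exp (-(u * t)) := by
              rw [← Real.exp_add]; ring_nf
            simp only [e2, e3]
            ring_nf
          · ring_nf
      _ = _ := by
          rw [lintegral_gamma (by linarith) one_pos (by norm_num)]
          simp
  have h2 : ∀ t : ℝ, ENNReal.ofReal (t ^ 4 * ((1 / (1 + t)) ^ a * Real.Gamma a))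
      = ENNReal.ofReal (t ^ 4 * (1 / (1 + t)) ^ a) * ENNReal.ofReal (Real.Gamma a) := by
    intro t
    rw [← ENNReal.ofReal_mul' hG.le, mul_assoc]
  simp_rw [h2] at key
  rw [lintegral_mul_const' _ _ ENNReal.ofReal_ne_top] at key
  rw [ENNReal.ofReal_div_of_pos hG, ← key, ENNReal.mul_div_cancel_right]
  · simpa using hG
  · exact ENNReal.ofReal_ne_top

/-! ### One-dimensional Gaussian factors -/

lemma integrable_pow_four_gaussian {l : ℝ} (hl : 0 < l) :
    Integrable fun x : ℝ => x ^ 4 * Real.exp (-l * x ^ 2) := by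
  have := integrable_rpow_mul_exp_neg_mul_sq hl (s := 4) (by norm_num)
  refine this.congr (.of_forall fun x => ?_)
  have e2 : x ^ (4 : ℝ) = x ^ 4 := by
    rw [← Real.rpow_natCast]; norm_num
  simp only [e2]

lemma integral_pow_four_gaussian {l : ℝ} (hl : 0 < l) :
    ∫ x : ℝ, x ^ 4 * Real.exp (-l * x ^ 2)
      = 3 / 4 * Real.pi ^ (1 / 2 : ℝ) * l ^ (-(5 / 2) : ℝ) := by
  have h := integral_comp_abs (f := fun x : ℝ => x ^ 4 * Real.exp (-l * x ^ 2))
  have h4 : ∀ x : ℝ, |x| ^ 4 = x ^ 4 := fun x => Even.pow_abs (by decide) x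
  simp only [h4, sq_abs] at h
  have h1 := integral_rpow_mul_exp_neg_mul_rpow (p := 2) (q := 4) (b := l)
    (by norm_num) (by norm_num) hl
  have hG : Real.Gamma (5 / 2) = 3 / 4 * Real.pi ^ (1 / 2 : ℝ) := by
    rw [show (5 / 2 : ℝ) = 1 / 2 + 1 + 1 by norm_num, Real.Gamma_add_one (by norm_num),
      Real.Gamma_add_one (by norm_num), Real.Gamma_one_half_eq, Real.sqrt_eq_rpow]
    ring
  have e2 : ∀ x : ℝ, x ^ (4 : ℝ) = x ^ 4 := fun x => by
    rw [← Real.rpow_natCast]; norm_num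
  have e3 : ∀ x : ℝ, x ^ (2 : ℝ) = x ^ 2 := fun x => by
    rw [← Real.rpow_natCast]; norm_num
  simp only [e2, e3] at h1
  rw [h, h1, show ((4 : ℝ) + 1) / 2 = 5 / 2 by norm_num, hG,
    show (-((4 : ℝ) + 1) / 2) = -(5 / 2) by norm_num]
  ring

lemma lintegral_prod_of_integrable {k : ℕ} (f : Fin k → ℝ → ℝ) (hf : ∀ i, Integrable (f i))
    (h0 : ∀ i x, 0 ≤ f i x) :
    ∫⁻ y : Fin k → ℝ, ENNReal.ofReal (∏ i, f i (y i))
      = ENNReal.ofReal (∏ i, ∫ x, f i x) := by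
  rw [← integral_fintype_prod_volume_eq_prod]
  exact (ofReal_integral_eq_lintegral_ofReal (Integrable.fintype_prod hf)
    (.of_forall fun y => Finset.prod_nonneg fun i _ => h0 i _)).symm

/-- The weight `t⁴ / (1 + t)²` of the last coordinate, extended by zero to `t ≤ 0` so that it
carries the restriction to the half-space. -/
noncomputable def wt (t : ℝ) : ℝ := (Ioi (0 : ℝ)).indicator (fun t => t ^ 4 / (1 + t) ^ 2) t

lemma wt_nonneg (t : ℝ) : 0 ≤ wt t :=
  indicator_nonneg (fun t _ => by positivity) t

@[fun_prop] lemma measurable_wt : Measurable wt :=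
  Measurable.indicator (by fun_prop) measurableSet_Ioi

lemma integrable_wt {l : ℝ} (hl : 0 < l) :
    Integrable fun t : ℝ => wt t * Real.exp (-l * (t + 1) ^ 2) := by
  refine (integrable_pow_four_gaussian hl).mono' (by fun_prop) (.of_forall fun t => ?_)
  rw [Real.norm_of_nonneg (mul_nonneg (wt_nonneg t) (Real.exp_pos _).le)]
  by_cases ht : 0 < t
  · rw [wt, indicator_of_mem (mem_Ioi.2 ht)]
    refine mul_le_mul ?_ ?_ (by positivity) (by positivity)
    · exact div_le_self (by positivity) (by nlinarith)
    · apply Real.exp_le_exp.2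
      nlinarith
  · rw [wt, indicator_of_notMem (by simpa using ht)]
    simp only [zero_mul]
    positivity

/-! ### Factorization over the coordinates -/

/-- The one-dimensional functions whose product over the coordinates is
`y₁⁴ · wt(yₙ) · exp(-l |y + eₙ|²)`: first, middle and last coordinate. -/
noncomputable def factor (m : ℕ) (l : ℝ) : Fin (m + 1 + 1) → ℝ → ℝ :=
  Fin.cons (fun t => t ^ 4 * Real.exp (-l * t ^ 2))
    (Fin.snoc (α := fun _ => ℝ → ℝ) (fun _ : Fin m => fun t => Real.exp (-l * t ^ 2))
      (fun t => wt t * Real.exp (-l * (t + 1) ^ 2)))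

/-- The squared Euclidean norm `|y + eₙ|²` in coordinates, with first, middle and last coordinate
separated. -/
noncomputable def shiftSq (m : ℕ) (y : Fin (m + 1 + 1) → ℝ) : ℝ :=
  y 0 ^ 2 + ∑ j : Fin m, y j.castSucc.succ ^ 2 + (y (Fin.last (m + 1)) + 1) ^ 2

lemma prod_factor (m : ℕ) (l : ℝ) (y : Fin (m + 1 + 1) → ℝ) :
    ∏ i, factor m l i (y i)
      = y 0 ^ 4 * wt (y (Fin.last (m + 1))) * Real.exp (-(shiftSq m y * l)) := by
  have e : Real.exp (-(shiftSq m y * l)) = Real.exp (-l * y 0 ^ 2)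
      * (∏ j : Fin m, Real.exp (-l * y j.castSucc.succ ^ 2))
      * Real.exp (-l * (y (Fin.last (m + 1)) + 1) ^ 2) := by
    rw [← Real.exp_sum, ← Real.exp_add, ← Real.exp_add, ← Finset.mul_sum, shiftSq]
    ring_nf
  rw [Fin.prod_univ_succ, Fin.prod_univ_castSucc, e]
  simp only [factor, Fin.cons_zero, Fin.cons_succ, Fin.snoc_castSucc, Fin.snoc_last]
  rw [← Fin.succ_last]
  ring

lemma lintegral_factor (m : ℕ) {l : ℝ} (hl : 0 < l) :
    ∫⁻ y : Fin (m + 1 + 1) → ℝ, ENNReal.ofReal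
        (y 0 ^ 4 * wt (y (Fin.last (m + 1))) * Real.exp (-(shiftSq m y * l)))
      = ENNReal.ofReal (3 / 4 * Real.pi ^ (((m : ℝ) + 1) / 2) * l ^ (-(((m : ℝ) + 5) / 2))
          * ∫ t, wt t * Real.exp (-l * (t + 1) ^ 2)) := by
  simp_rw [← prod_factor]
  rw [lintegral_prod_of_integrable]
  · congr 1
    rw [Fin.prod_univ_succ, Fin.prod_univ_castSucc]
    simp only [factor, Fin.cons_zero, Fin.cons_succ, Fin.snoc_castSucc, Fin.snoc_last,
      integral_pow_four_gaussian hl, integral_gaussian, Finset.prod_const, Finset.card_univ,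
      Fintype.card_fin]
    have hpi := Real.pi_pos
    have e1 : √(Real.pi / l) ^ m = Real.pi ^ ((m : ℝ) / 2) * l ^ (-((m : ℝ) / 2)) := by
      rw [Real.sqrt_eq_rpow, ← Real.rpow_natCast, ← Real.rpow_mul (by positivity),
        Real.div_rpow hpi.le hl.le, Real.rpow_neg hl.le, div_eq_mul_inv]
      ring_nf
    have e2 : Real.pi ^ (((m : ℝ) + 1) / 2) = Real.pi ^ (1 / 2 : ℝ) * Real.pi ^ ((m : ℝ) / 2) := by
      rw [← Real.rpow_add hpi]; ring_nf
    have e3 : l ^ (-(((m : ℝ) + 5) / 2)) = l ^ (-(5 / 2) : ℝ) * l ^ (-((m : ℝ) / 2)) := by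
      rw [← Real.rpow_add hl]; ring_nf
    rw [e1, e2, e3]
    ring
  · intro i
    refine Fin.cases ?_ (fun j => Fin.lastCases ?_ (fun j => ?_) j) i
    · simpa only [factor, Fin.cons_zero] using integrable_pow_four_gaussian hl
    · simpa only [factor, Fin.cons_succ, Fin.snoc_last] using integrable_wt hl
    · simpa only [factor, Fin.cons_succ, Fin.snoc_castSucc] using integrable_exp_neg_mul_sq hl
  · intro i
    refine Fin.cases ?_ (fun j => Fin.lastCases ?_ (fun j => ?_) j) i
    · intro x
      simp only [factor, Fin.cons_zero]
      positivity
    · intro x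
      simp only [factor, Fin.cons_succ, Fin.snoc_last]
      exact mul_nonneg (wt_nonneg x) (Real.exp_pos _).le
    · intro x
      simp only [factor, Fin.cons_succ, Fin.snoc_castSucc]
      positivity

/-- Returns the last-coordinate integral to `∫⁻` form over `(0, ∞)`, so that it can be exchanged with
the `l`-integral. -/
lemma lintegral_weighted {l : ℝ} (hl : 0 < l) {c : ℝ} (hc : 0 ≤ c) :
    ENNReal.ofReal (c * ∫ t, wt t * Real.exp (-l * (t + 1) ^ 2))
      = ∫⁻ t in Ioi (0 : ℝ),
          ENNReal.ofReal (c * (t ^ 4 / (1 + t) ^ 2 * Real.exp (-((1 + t) ^ 2 * l)))) := by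
  rw [← integral_const_mul, ofReal_integral_eq_lintegral_ofReal ((integrable_wt hl).const_mul c)
    (.of_forall fun t => mul_nonneg hc (mul_nonneg (wt_nonneg t) (Real.exp_pos _).le)),
    ← lintegral_indicator measurableSet_Ioi]
  refine lintegral_congr fun t => ?_
  by_cases ht : t ∈ Ioi (0 : ℝ)
  · rw [indicator_of_mem ht, wt, indicator_of_mem ht]
    ring_nf
  · rw [indicator_of_notMem ht, wt, indicator_of_notMem ht]
    simp

lemma shiftSq_pos {m : ℕ} {y : Fin (m + 1 + 1) → ℝ} (hy : 0 < y (Fin.last (m + 1))) :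
    0 < shiftSq m y := by
  unfold shiftSq
  positivity

/-! ### The integral over the half-space -/

/-- The integral over `ℝⁿ`, `n = m + 2`, without the constant `1 / (16 n²)`. Positivity of `m` makes
the Beta integral in the last coordinate converge. -/
lemma lintegral_core (m : ℕ) (hm : 0 < m) :
    ∫⁻ y : Fin (m + 1 + 1) → ℝ, ENNReal.ofReal
        (y 0 ^ 4 * wt (y (Fin.last (m + 1))) * (1 / shiftSq m y) ^ ((m : ℝ) + 4))
      = ENNReal.ofReal (18 * Real.pi ^ (((m : ℝ) + 1) / 2) * Real.Gamma (((m : ℝ) + 3) / 2)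
          * Real.Gamma m / (Real.Gamma (m + 5) * Real.Gamma (m + 4))) := by
  have hm' : (0 : ℝ) < m := by exact_mod_cast hm
  have hG : 0 < Real.Gamma ((m : ℝ) + 4) := Real.Gamma_pos_of_pos (by positivity)
  have hG3 : 0 < Real.Gamma (((m : ℝ) + 3) / 2) := Real.Gamma_pos_of_pos (by positivity)
  have hpi := Real.pi_pos
  set K : ℝ := 3 / 4 * Real.pi ^ (((m : ℝ) + 1) / 2) with hK
  have hK0 : 0 ≤ K := by positivity
  have hw : ∀ y : Fin (m + 1 + 1) → ℝ, 0 ≤ y 0 ^ 4 * wt (y (Fin.last (m + 1))) := fun y =>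
    mul_nonneg (by positivity) (wt_nonneg _)
  have key : ∫⁻ y : Fin (m + 1 + 1) → ℝ, ENNReal.ofReal
        (y 0 ^ 4 * wt (y (Fin.last (m + 1))) * ((1 / shiftSq m y) ^ ((m : ℝ) + 4)
          * Real.Gamma ((m : ℝ) + 4)))
      = ENNReal.ofReal (K * Real.Gamma (((m : ℝ) + 3) / 2)
          * (24 * Real.Gamma m / Real.Gamma (m + 5))) := by
    calc
      _ = ∫⁻ y : Fin (m + 1 + 1) → ℝ, ∫⁻ l in Ioi (0 : ℝ), ENNReal.ofReal
          (y 0 ^ 4 * wt (y (Fin.last (m + 1)))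
            * (l ^ ((m : ℝ) + 4 - 1) * Real.exp (-(shiftSq m y * l)))) := by
          refine lintegral_congr fun y => ?_
          by_cases hy : 0 < y (Fin.last (m + 1))
          · exact (lintegral_gamma (by positivity) (shiftSq_pos hy) (hw y)).symm
          -- outside the half-space both sides vanish because the weight does
          · simp [wt, hy]
      _ = ∫⁻ l in Ioi (0 : ℝ), ∫⁻ y : Fin (m + 1 + 1) → ℝ, ENNReal.ofReal
          (y 0 ^ 4 * wt (y (Fin.last (m + 1)))
            * (l ^ ((m : ℝ) + 4 - 1) * Real.exp (-(shiftSq m y * l)))) := by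
          refine lintegral_lintegral_swap (Measurable.aemeasurable ?_)
          unfold Function.uncurry shiftSq
          fun_prop
      _ = ∫⁻ l in Ioi (0 : ℝ), ∫⁻ t in Ioi (0 : ℝ),
          ENNReal.ofReal (K * (t ^ 4 / (1 + t) ^ 2)
            * (l ^ (((m : ℝ) + 3) / 2 - 1) * Real.exp (-((1 + t) ^ 2 * l)))) := by
          refine setLIntegral_congr_fun measurableSet_Ioi fun l hl => ?_
          have hl : 0 < l := hl
          have h0 : 0 ≤ l ^ ((m : ℝ) + 4 - 1) := by positivity
          have e : ∀ y : Fin (m + 1 + 1) → ℝ, ENNReal.ofReal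
              (y 0 ^ 4 * wt (y (Fin.last (m + 1)))
                * (l ^ ((m : ℝ) + 4 - 1) * Real.exp (-(shiftSq m y * l))))
              = ENNReal.ofReal (l ^ ((m : ℝ) + 4 - 1)) * ENNReal.ofReal
              (y 0 ^ 4 * wt (y (Fin.last (m + 1))) * Real.exp (-(shiftSq m y * l))) := by
            intro y
            rw [← ENNReal.ofReal_mul h0]
            ring_nf
          have e2 : l ^ (((m : ℝ) + 3) / 2 - 1)
              = l ^ ((m : ℝ) + 4 - 1) * l ^ (-(((m : ℝ) + 5) / 2)) := by
            rw [← Real.rpow_add hl]; ring_nf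
          simp only [e]
          rw [lintegral_const_mul' _ _ ENNReal.ofReal_ne_top, lintegral_factor m hl,
            ← ENNReal.ofReal_mul h0, ← mul_assoc, lintegral_weighted hl (by positivity), e2]
          refine lintegral_congr fun t => ?_
          rw [hK]
          ring_nf
      _ = ∫⁻ t in Ioi (0 : ℝ), ∫⁻ l in Ioi (0 : ℝ),
          ENNReal.ofReal (K * (t ^ 4 / (1 + t) ^ 2)
            * (l ^ (((m : ℝ) + 3) / 2 - 1) * Real.exp (-((1 + t) ^ 2 * l)))) := by
          refine lintegral_lintegral_swap (Measurable.aemeasurable ?_)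
          unfold Function.uncurry
          fun_prop
      _ = ∫⁻ t in Ioi (0 : ℝ), ENNReal.ofReal (K * Real.Gamma (((m : ℝ) + 3) / 2))
            * ENNReal.ofReal (t ^ 4 * (1 / (1 + t)) ^ ((m : ℝ) + 5)) := by
          refine setLIntegral_congr_fun measurableSet_Ioi fun t ht => ?_
          have ht : 0 < t := ht
          have h1 : 0 < 1 + t := by linarith
          rw [lintegral_gamma (by positivity) (by positivity) (by positivity),
            ← ENNReal.ofReal_mul (by positivity)]
          have e : (1 / (1 + t) ^ 2) ^ (((m : ℝ) + 3) / 2) = (1 / (1 + t)) ^ ((m : ℝ) + 3) := by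
            rw [← one_div_pow, ← Real.rpow_natCast, ← Real.rpow_mul (by positivity)]
            congr 1
            push_cast
            ring
          have e2 : (1 / (1 + t)) ^ ((m : ℝ) + 5)
              = (1 / (1 + t)) ^ ((m : ℝ) + 3) * (1 / (1 + t)) ^ 2 := by
            rw [← Real.rpow_natCast, ← Real.rpow_add (by positivity)]
            congr 1
            push_cast
            ring
          rw [e, e2]
          congr 1
          field_simp
      _ = _ := by
          rw [lintegral_const_mul' _ _ ENNReal.ofReal_ne_top, lintegral_beta (by linarith),
            ← ENNReal.ofReal_mul (by positivity)]
          ring_nf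
  have h2 : ∀ y : Fin (m + 1 + 1) → ℝ, ENNReal.ofReal
        (y 0 ^ 4 * wt (y (Fin.last (m + 1))) * ((1 / shiftSq m y) ^ ((m : ℝ) + 4)
          * Real.Gamma ((m : ℝ) + 4)))
      = ENNReal.ofReal
        (y 0 ^ 4 * wt (y (Fin.last (m + 1))) * (1 / shiftSq m y) ^ ((m : ℝ) + 4))
          * ENNReal.ofReal (Real.Gamma ((m : ℝ) + 4)) := by
    intro y
    rw [← ENNReal.ofReal_mul' hG.le, ← mul_assoc]
  simp_rw [h2] at key
  rw [lintegral_mul_const' _ _ ENNReal.ofReal_ne_top] at key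
  have e : 18 * Real.pi ^ (((m : ℝ) + 1) / 2) * Real.Gamma (((m : ℝ) + 3) / 2)
          * Real.Gamma m / (Real.Gamma (m + 5) * Real.Gamma (m + 4))
      = K * Real.Gamma (((m : ℝ) + 3) / 2)
          * (24 * Real.Gamma m / Real.Gamma (m + 5)) / Real.Gamma (m + 4) := by
    rw [hK]; field_simp; ring
  rw [e, ENNReal.ofReal_div_of_pos hG, ← key, ENNReal.mul_div_cancel_right]
  · simpa using hG
  · exact ENNReal.ofReal_ne_top

lemma integral_core (m : ℕ) (hm : 0 < m) :
    ∫ y : Fin (m + 1 + 1) → ℝ,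
        (y 0 ^ 4 * wt (y (Fin.last (m + 1))) * (1 / shiftSq m y) ^ ((m : ℝ) + 4))
      = 18 * Real.pi ^ (((m : ℝ) + 1) / 2) * Real.Gamma (((m : ℝ) + 3) / 2)
          * Real.Gamma m / (Real.Gamma (m + 5) * Real.Gamma (m + 4)) := by
  have hm' : (0 : ℝ) < m := by exact_mod_cast hm
  have hpi := Real.pi_pos
  rw [integral_eq_lintegral_of_nonneg_ae, lintegral_core m hm, ENNReal.toReal_ofReal]
  · have h1 := Real.Gamma_pos_of_pos hm'
    positivity
  · refine .of_forall fun y => ?_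
    have h1 : 0 ≤ shiftSq m y := by unfold shiftSq; positivity
    have h2 := wt_nonneg (y (Fin.last (m + 1)))
    simp only [Pi.zero_apply]
    positivity
  · refine Measurable.aestronglyMeasurable ?_
    unfold shiftSq
    fun_prop

/-- `∫_{ℝⁿ₊} |x+eₙ|^{−4} ((xₙ²/(4n(1+xₙ)))|x+eₙ|^{−n})² x₁⁴ dx
  = 9 ω_{n−2} B((n−1)/2,(n+1)/2) / (16(n+2)(n+1)²n⁴(n−1)(n−2))`. -/
theorem I1_computation (n : ℕ) (hn : 5 ≤ n) :
    ∫ x in {x : EuclideanSpace ℝ (Fin n) | 0 < x ⟨n - 1, by omega⟩},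
        ‖x + EuclideanSpace.single (⟨n - 1, by omega⟩ : Fin n) (1 : ℝ)‖ ^ (-4 : ℝ)
          * ((x ⟨n - 1, by omega⟩) ^ 2 / (4 * (n : ℝ) * (1 + x ⟨n - 1, by omega⟩))
              * ‖x + EuclideanSpace.single (⟨n - 1, by omega⟩ : Fin n) (1 : ℝ)‖
                  ^ (-(n : ℝ))) ^ 2
          * (x ⟨0, by omega⟩) ^ 4
      = 9 * sphereVol (n - 2) * realBeta (((n : ℝ) - 1) / 2) (((n : ℝ) + 1) / 2)
          / (16 * ((n : ℝ) + 2) * ((n : ℝ) + 1) ^ 2 * (n : ℝ) ^ 4 * ((n : ℝ) - 1)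
              * ((n : ℝ) - 2)) := by
  obtain ⟨m, rfl⟩ : ∃ m, n = m + 1 + 1 := ⟨n - 2, by omega⟩
  have hm : 0 < m := by omega
  have hm' : (0 : ℝ) < m := by exact_mod_cast hm
  have hi : (⟨m + 1 + 1 - 1, by omega⟩ : Fin (m + 1 + 1)) = Fin.last (m + 1) := rfl
  have hz : (⟨0, by omega⟩ : Fin (m + 1 + 1)) = 0 := rfl
  have hs : m + 1 + 1 - 2 = m := by omega
  rw [hi, hz, hs]
  have hmeas : MeasurableSet {x : EuclideanSpace ℝ (Fin (m + 1 + 1)) | 0 < x (Fin.last (m + 1))} :=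
    measurableSet_lt measurable_const (by fun_prop)
  have hN : ∀ y : Fin (m + 1 + 1) → ℝ,
      ‖(WithLp.toLp 2 y : EuclideanSpace ℝ (Fin (m + 1 + 1)))
        + EuclideanSpace.single (Fin.last (m + 1)) (1 : ℝ)‖ ^ 2 = shiftSq m y := by
    intro y
    rw [EuclideanSpace.real_norm_sq_eq, Fin.sum_univ_succ, Fin.sum_univ_castSucc, shiftSq]
    simp [Fin.ext_iff, fun j : Fin m => j.isLt.ne, add_assoc]
  rw [← integral_indicator hmeas, ← (PiLp.volume_preserving_toLp (Fin (m + 1 + 1))).integral_comp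
    (MeasurableEquiv.toLp 2 _).measurableEmbedding]
  have hpt : ∀ y : Fin (m + 1 + 1) → ℝ,
      ({x : EuclideanSpace ℝ (Fin (m + 1 + 1)) | 0 < x (Fin.last (m + 1))}.indicator
        (fun x => ‖x + EuclideanSpace.single (Fin.last (m + 1)) (1 : ℝ)‖ ^ (-4 : ℝ)
          * ((x (Fin.last (m + 1))) ^ 2 / (4 * ((m + 1 + 1 : ℕ) : ℝ) * (1 + x (Fin.last (m + 1))))
              * ‖x + EuclideanSpace.single (Fin.last (m + 1)) (1 : ℝ)‖
                  ^ (-((m + 1 + 1 : ℕ) : ℝ))) ^ 2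
          * (x 0) ^ 4) (WithLp.toLp 2 y))
      = 1 / (16 * ((m : ℝ) + 2) ^ 2)
        * (y 0 ^ 4 * wt (y (Fin.last (m + 1))) * (1 / shiftSq m y) ^ ((m : ℝ) + 4)) := by
    intro y
    by_cases hy : 0 < y (Fin.last (m + 1))
    · rw [indicator_of_mem (by exact hy), wt, indicator_of_mem (by exact hy)]
      have hS := shiftSq_pos hy
      rw [← hN y] at hS ⊢
      set r := ‖(WithLp.toLp 2 y : EuclideanSpace ℝ (Fin (m + 1 + 1)))
        + EuclideanSpace.single (Fin.last (m + 1)) (1 : ℝ)‖ with hr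
      have hr0 : 0 < r := lt_of_le_of_ne (norm_nonneg _) (fun h => by simp [← h] at hS)
      have e1 : (1 / r ^ 2) ^ ((m : ℝ) + 4) = r ^ (-4 : ℝ) * (r ^ (-((m + 1 + 1 : ℕ) : ℝ))) ^ 2 := by
        rw [one_div, ← Real.rpow_natCast, ← Real.rpow_natCast, ← Real.rpow_neg hr0.le,
          ← Real.rpow_mul hr0.le, ← Real.rpow_mul hr0.le, ← Real.rpow_add hr0]
        congr 1
        push_cast
        ring
      rw [e1]
      have h1 : 0 < 1 + y (Fin.last (m + 1)) := by linarith
      push_cast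
      field_simp
      ring
    · rw [indicator_of_notMem (by exact hy), wt, indicator_of_notMem (by exact hy)]
      simp
  simp_rw [hpt]
  rw [integral_const_mul, integral_core m hm, sphereVol, realBeta]
  have g5 : Real.Gamma ((m : ℝ) + 5)
      = (m + 4) * (m + 3) * (m + 2) * (m + 1) * m * Real.Gamma m := by
    rw [show (m : ℝ) + 5 = m + 1 + 1 + 1 + 1 + 1 by ring]
    repeat rw [Real.Gamma_add_one (by positivity)]
    ring
  have g4 : Real.Gamma ((m : ℝ) + 4) = (m + 3) * (m + 2) * Real.Gamma (m + 2) := by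
    rw [show (m : ℝ) + 4 = m + 2 + 1 + 1 by ring]
    repeat rw [Real.Gamma_add_one (by positivity)]
    ring
  have a1 : (((m + 1 + 1 : ℕ) : ℝ) - 1) / 2 = ((m : ℝ) + 1) / 2 := by push_cast; ring
  have a2 : (((m + 1 + 1 : ℕ) : ℝ) + 1) / 2 = ((m : ℝ) + 3) / 2 := by push_cast; ring
  have a3 : ((m : ℝ) + 1) / 2 + ((m : ℝ) + 3) / 2 = m + 2 := by ring
  rw [a1, a2, a3, g5, g4]
  have p0 := Real.Gamma_pos_of_pos hm'
  have p1 : 0 < Real.Gamma ((m : ℝ) + 2) := Real.Gamma_pos_of_pos (by positivity)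
  have p2 : 0 < Real.Gamma (((m : ℝ) + 1) / 2) := Real.Gamma_pos_of_pos (by positivity)
  have q : (((m + 1 + 1 : ℕ) : ℝ)) = m + 2 := by push_cast; ring
  rw [q, show (m : ℝ) + 2 - 1 = m + 1 by ring, show (m : ℝ) + 2 - 2 = m by ring]
  field_simp
  ring
end

section
/- Let n ≥ 1 be an integer and define u : ℝ^{n+4}₊ → ℝ by u(x) = (x_{n+4}³ / (6n(1 + x_{n+4}))) · |x + e_{n+4}|^{−n}. Then for every x ∈ ℝ^{n+4}₊, −Δu(x) = x_{n+4}²·|x + e_{n+4}|^{−n−2} − (1/(3n)) · ( 1 − (1 + x_{n+4})^{−3} ) · |x + e_{n+4}|^{−n}. -/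
/-!
The function is a product `G(y_k) |y + e|^p` with `p = -n`, and
`∇|z|^p = p |z|^{p-2} z`, `Δ|z|^p = p (p - 2 + m) |z|^{p-2}` on `ℝ^m`, so
`Δ(G |·+e|^p) = G'' |x+e|^p + p (2 (x+e)_k G' + (p - 2 + m) G) |x+e|^{p-2}`
(`laplacian_coord_mul_norm_rpow`). With `m = n + 4` the last bracket is
`2 (1 + t) G' + 2 G` for `t = x_k`. For `G(t) = t³ / (6n(1+t))` this equals `t² / n`, and the
identity `t³/(1+t) = t² - t + 1 - 1/(1+t)` gives `G'' = (1 - (1+t)⁻³) / (3n)`.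
-/

open Set

/-- The Euclidean Laplacian `Δf = Σᵢ ∂²f/∂xᵢ²`. -/
noncomputable def laplacian {m : ℕ} (f : EuclideanSpace ℝ (Fin m) → ℝ)
    (x : EuclideanSpace ℝ (Fin m)) : ℝ :=
  ∑ i : Fin m, fderiv ℝ (fun y => fderiv ℝ f y (EuclideanSpace.single i 1)) x
    (EuclideanSpace.single i 1)

theorem hasFDerivAt_coord {m : ℕ} (i : Fin m) (y : EuclideanSpace ℝ (Fin m)) :
    HasFDerivAt (fun z : EuclideanSpace ℝ (Fin m) => z i)
      (EuclideanSpace.proj i : EuclideanSpace ℝ (Fin m) →L[ℝ] ℝ) y :=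
  (EuclideanSpace.proj i : EuclideanSpace ℝ (Fin m) →L[ℝ] ℝ).hasFDerivAt

/-- `∇|y + e|^p = p |y + e|^{p-2} (y + e)` away from the singularity, for every real `p`. -/
theorem hasFDerivAt_norm_add_rpow {m : ℕ} (e y : EuclideanSpace ℝ (Fin m)) (p : ℝ)
    (h : y + e ≠ 0) :
    HasFDerivAt (fun z : EuclideanSpace ℝ (Fin m) => ‖z + e‖ ^ p)
      ((p * ‖y + e‖ ^ (p - 2)) • innerSL ℝ (y + e)) y := by
  have hpos : 0 < ‖y + e‖ := norm_pos_iff.mpr h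
  have h1 : HasFDerivAt (fun z : EuclideanSpace ℝ (Fin m) => ‖z + e‖ ^ 2)
      (2 • innerSL ℝ (y + e)) y := by
    have := ((hasStrictFDerivAt_norm_sq (y + e)).hasFDerivAt).comp y
      ((hasFDerivAt_id y).add_const e)
    refine this.congr_fderiv ?_
    ext v
    simp
  have h2 := h1.rpow_const (p := p / 2) (Or.inl (by positivity))
  have hsq (z : EuclideanSpace ℝ (Fin m)) (q : ℝ) : (‖z + e‖ ^ 2) ^ (q / 2) = ‖z + e‖ ^ q := by
    rw [← Real.rpow_natCast, ← Real.rpow_mul (norm_nonneg _)]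
    congr 1
    push_cast
    ring
  have h3 : (‖y + e‖ ^ 2) ^ (p / 2 - 1) = ‖y + e‖ ^ (p - 2) := by
    rw [← hsq]
    congr 1
    ring
  simp only [hsq] at h2
  rw [h3] at h2
  refine h2.congr_fderiv ?_
  ext v
  simp
  ring

theorem hasFDerivAt_coord_mul_norm_rpow {m : ℕ} (k : Fin m) (e y : EuclideanSpace ℝ (Fin m))
    (p : ℝ) (G : ℝ → ℝ) (G1 : ℝ) (h : y + e ≠ 0) (hG : HasDerivAt G G1 (y k)) :
    HasFDerivAt (fun z : EuclideanSpace ℝ (Fin m) => G (z k) * ‖z + e‖ ^ p)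
      (G (y k) • ((p * ‖y + e‖ ^ (p - 2)) • innerSL ℝ (y + e))
        + ‖y + e‖ ^ p • (G1 • EuclideanSpace.proj k)) y :=
  (hG.comp_hasFDerivAt y (hasFDerivAt_coord k y)).mul (hasFDerivAt_norm_add_rpow e y p h)

/-- Laplacian of a function of one coordinate times a power of the distance to `-e`. -/
theorem laplacian_coord_mul_norm_rpow {m : ℕ} (k : Fin m) (e x : EuclideanSpace ℝ (Fin m))
    (p : ℝ) (G G1 : ℝ → ℝ) (G2 : ℝ) (h : x + e ≠ 0)
    (hG : ∀ᶠ t in nhds (x k), HasDerivAt G (G1 t) t) (hG1 : HasDerivAt G1 G2 (x k)) :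
    laplacian (fun y : EuclideanSpace ℝ (Fin m) => G (y k) * ‖y + e‖ ^ p) x
      = G2 * ‖x + e‖ ^ p
        + p * (2 * (x + e) k * G1 (x k) + (p - 2 + m) * G (x k)) * ‖x + e‖ ^ (p - 2) := by
  have hterm (i : Fin m) :
      fderiv ℝ (fun y => fderiv ℝ
        (fun y : EuclideanSpace ℝ (Fin m) => G (y k) * ‖y + e‖ ^ p) y
          (EuclideanSpace.single i 1)) x (EuclideanSpace.single i 1)
      = (if k = i then G2 * ‖x + e‖ ^ p
          + 2 * p * (x + e) k * G1 (x k) * ‖x + e‖ ^ (p - 2) else 0)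
        + p * G (x k) * ‖x + e‖ ^ (p - 2)
        + p * (p - 2) * G (x k) * ‖x + e‖ ^ (p - 2 - 2) * (x + e) i ^ 2 := by
    have hev : (fun y => fderiv ℝ
        (fun y : EuclideanSpace ℝ (Fin m) => G (y k) * ‖y + e‖ ^ p) y
          (EuclideanSpace.single i 1)) =ᶠ[nhds x]
        fun y => p * ((G (y k) * ‖y + e‖ ^ (p - 2)) * (y i + e i))
          + (if k = i then 1 else 0) * (G1 (y k) * ‖y + e‖ ^ p) := by
      have c1 : Continuous fun y : EuclideanSpace ℝ (Fin m) => y k :=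
        (EuclideanSpace.proj k : EuclideanSpace ℝ (Fin m) →L[ℝ] ℝ).continuous
      have c2 : Continuous fun y : EuclideanSpace ℝ (Fin m) => y + e := by fun_prop
      filter_upwards [c1.continuousAt.eventually hG,
        c2.continuousAt.eventually_ne h] with y hy1 hy2
      rw [(hasFDerivAt_coord_mul_norm_rpow k e y p G _ hy2 hy1).fderiv]
      simp [EuclideanSpace.inner_single_right]
      split_ifs <;> ring
    rw [hev.fderiv_eq]
    have hA := hasFDerivAt_coord_mul_norm_rpow k e x (p - 2) G _ h hG.self_of_nhds
    have hB := hasFDerivAt_coord_mul_norm_rpow k e x p G1 _ h hG1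
    have hC := ((hA.mul ((hasFDerivAt_coord i x).add_const (e i))).const_mul p).add
      (hB.const_mul (if k = i then (1 : ℝ) else 0))
    refine (congrArg (fun L => L (EuclideanSpace.single i (1 : ℝ))) hC.fderiv).trans ?_
    by_cases hki : k = i
    · subst hki
      simp [EuclideanSpace.inner_single_right]
      ring
    · simp [EuclideanSpace.inner_single_right, hki]
      ring
  have hpos : 0 < ‖x + e‖ := norm_pos_iff.mpr h
  have hr : ‖x + e‖ ^ (p - 2 - 2) * ‖x + e‖ ^ 2 = ‖x + e‖ ^ (p - 2) := by
    rw [← Real.rpow_natCast, ← Real.rpow_add hpos]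
    congr 1
    push_cast
    ring
  have hn : ∑ i, (x + e) i ^ 2 = ‖x + e‖ ^ 2 := by
    rw [EuclideanSpace.real_norm_sq_eq]
  unfold laplacian
  simp only [hterm]
  rw [Finset.sum_add_distrib, Finset.sum_add_distrib, Finset.sum_ite_eq,
    ← Finset.mul_sum Finset.univ (fun i => (x + e) i ^ 2), hn,
    mul_assoc _ _ (‖x + e‖ ^ 2), hr]
  simp
  ring

/-- For `u(x) = (x_{n+4}³/(6n(1+x_{n+4}))) |x+e_{n+4}|^{−n}` one has
`−Δu = x_{n+4}² |x+e_{n+4}|^{−n−2} − (1/(3n))(1 − (1+x_{n+4})^{−3}) |x+e_{n+4}|^{−n}`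
in `ℝ^{n+4}₊`. -/
theorem subsolution_computation_umbilic (n : ℕ) (hn : 1 ≤ n)
    (x : EuclideanSpace ℝ (Fin (n + 4))) (hx : 0 < x ⟨n + 3, by omega⟩) :
    -laplacian
        (fun y : EuclideanSpace ℝ (Fin (n + 4)) =>
          (y ⟨n + 3, by omega⟩) ^ 3 / (6 * (n : ℝ) * (1 + y ⟨n + 3, by omega⟩))
            * ‖y + EuclideanSpace.single (⟨n + 3, by omega⟩ : Fin (n + 4)) (1 : ℝ)‖
                ^ (-(n : ℝ))) x
      = (x ⟨n + 3, by omega⟩) ^ 2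
            * ‖x + EuclideanSpace.single (⟨n + 3, by omega⟩ : Fin (n + 4)) (1 : ℝ)‖
                ^ (-(n : ℝ) - 2)
          - 1 / (3 * (n : ℝ)) * (1 - (1 + x ⟨n + 3, by omega⟩) ^ (-3 : ℝ))
            * ‖x + EuclideanSpace.single (⟨n + 3, by omega⟩ : Fin (n + 4)) (1 : ℝ)‖
                ^ (-(n : ℝ)) := by
  have hn0 : (n : ℝ) ≠ 0 := by positivity
  set k : Fin (n + 4) := ⟨n + 3, by omega⟩ with hk
  have hek : (x + EuclideanSpace.single k (1 : ℝ)) k = 1 + x k := by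
    simp [add_comm]
  have hne : x + EuclideanSpace.single k (1 : ℝ) ≠ 0 := by
    intro h0
    rw [h0] at hek
    simp at hek
    linarith
  have ht : 1 + x k ≠ 0 := by positivity
  rw [laplacian_coord_mul_norm_rpow k (EuclideanSpace.single k (1 : ℝ)) x (-(n : ℝ))
    (fun t => t ^ 3 / (6 * (n : ℝ) * (1 + t)))
    (fun t => (3 * t ^ 2 + 2 * t ^ 3) / (6 * (n : ℝ) * (1 + t) ^ 2))
    (1 / (3 * (n : ℝ)) * (1 - ((1 + x k) ^ 3)⁻¹)) hne ?_ ?_, hek]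
  · have h3 : (1 + x k) ^ (-3 : ℝ) = ((1 + x k) ^ 3)⁻¹ := by
      rw [Real.rpow_neg (by positivity)]
      norm_cast
    have hc : -(n : ℝ) * (2 * (1 + x k) * ((3 * x k ^ 2 + 2 * x k ^ 3)
          / (6 * (n : ℝ) * (1 + x k) ^ 2))
        + (-(n : ℝ) - 2 + ((n + 4 : ℕ) : ℝ)) * (x k ^ 3 / (6 * (n : ℝ) * (1 + x k))))
        = -(x k ^ 2) := by
      push_cast
      field_simp
      ring
    rw [h3]
    simp only [hc]
    ring
  · filter_upwards [lt_mem_nhds hx] with t ht0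
    have ht1 : 1 + t ≠ 0 := by positivity
    have := (hasDerivAt_pow 3 t).div (((hasDerivAt_id t).const_add 1).const_mul (6 * (n : ℝ)))
      (by simp [hn0, ht1])
    refine this.congr_deriv ?_
    simp
    field_simp
    ring
  · have := (((hasDerivAt_pow 2 (x k)).const_mul 3).add ((hasDerivAt_pow 3 (x k)).const_mul 2)).div
      ((((hasDerivAt_id (x k)).const_add 1).pow 2).const_mul (6 * (n : ℝ)))
      (by simp [hn0, ht])
    refine this.congr_deriv ?_
    simp
    field_simp
    ring
end
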